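/- For all x, y ∈ Bⁿ, τ̃_{Bⁿ}(x,y) ≥ log(1 + 2|x−y|/√(4 − |x−y|²)), with equality when y = −x; equivalently, if w = (|x−y|/2) e₁ (where e₁ is the first standard basis vector), then τ̃_{Bⁿ}(x,y) ≥ τ̃_{Bⁿ}(−w, w) = log(1 + 2|x−y|/√(4 − |x−y|²)). -/

import Mathlib

/-!
Write `d = |x - y|`. Since `2d / √(4 - d²) = d / √(1 - d²/4)`, the lower bound amounts to finding a
unit vector `p` with `|x - p| |p - y| ≤ 1 - d²/4`. Such a `p` is the nearer of the two points, as
seen from the midpoint of `x` and `y`, where the line through `x` and `y` meets the sphere: its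
distance `t` to that midpoint is at most half the length of the chord, hence at most `1`, and
`|x - p| |p - y| = t² - d²/4` (`exists_sphere_mul_le`).

For antipodal points the bound is attained, because by Cauchy–Schwarz every unit vector `p` satisfies
`|x - p| |p + x| ≥ ⟪p - x, p + x⟫ = 1 - |x|²`. The identity for `-w, w` is an instance of this
case, as `|-w - w| = |x - y|`.
-/


open Metric Set

/-- The scale invariant Cassinian metric
`τ̃_D(x,y) = log(1 + sup_{p ∈ ∂D} |x−y|/√(|x−p||p−y|))`. -/
noncomputable def scTau {n : ℕ} (D : Set (EuclideanSpace ℝ (Fin n)))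
    (x y : EuclideanSpace ℝ (Fin n)) : ℝ :=
  Real.log (1 + sSup ((fun p => dist x y / Real.sqrt (dist x p * dist p y)) '' frontier D))

/-- The case where `x` is the endpoint farther from the origin: the ray from `y` through `x` leaves
the ball at a suitable `p`. -/
theorem exists_sphere_mul_le_of_norm_le {n : ℕ} {x y : EuclideanSpace ℝ (Fin n)}
    (hx : ‖x‖ < 1) (hxy : ‖y‖ ≤ ‖x‖) (hne : x ≠ y) :
    ∃ p ∈ sphere (0 : EuclideanSpace ℝ (Fin n)) 1,
      dist x p * dist p y ≤ 1 - dist x y ^ 2 / 4 := by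
  have hd : 0 < ‖x - y‖ := norm_pos_iff.mpr (sub_ne_zero.mpr hne)
  obtain ⟨u, hu, hup⟩ : ∃ u ∈ Icc (0 : ℝ) (2 / ‖x - y‖), ‖x + u • (x - y)‖ = 1 := by
    have hc : ContinuousOn (fun u : ℝ => ‖x + u • (x - y)‖) (Icc 0 (2 / ‖x - y‖)) := by
      fun_prop
    refine intermediate_value_Icc (by positivity) hc ⟨by simpa using hx.le, ?_⟩
    have h1 : ‖(2 / ‖x - y‖) • (x - y)‖ = 2 := by
      rw [norm_smul, Real.norm_of_nonneg (by positivity)]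
      field_simp
    have h2 := norm_sub_le (x + (2 / ‖x - y‖) • (x - y)) x
    rw [add_sub_cancel_left, h1] at h2
    change 1 ≤ ‖x + (2 / ‖x - y‖) • (x - y)‖
    linarith
  have hu0 : 0 ≤ u := hu.1
  refine ⟨x + u • (x - y), by simpa using hup, ?_⟩
  have e1 : dist x (x + u • (x - y)) = u * ‖x - y‖ := by
    rw [dist_self_add_right, norm_smul, Real.norm_of_nonneg hu0]
  have e2 : dist (x + u • (x - y)) y = (1 + u) * ‖x - y‖ := by
    have : x + u • (x - y) - y = (1 + u) • (x - y) := by module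
    rw [dist_eq_norm, this, norm_smul, Real.norm_of_nonneg (by positivity)]
  rw [e1, e2, dist_eq_norm]
  -- Expanding `|p|² = 1` around the midpoint of `x` and `y`; the cross term is
  -- `(u + 1/2) (|x|² - |y|²) ≥ 0`.
  have e3 : ‖x + u • (x - y)‖ ^ 2 =
      ‖(1 / 2 : ℝ) • (x + y)‖ ^ 2 + (u + 1 / 2) * (‖x‖ ^ 2 - ‖y‖ ^ 2)
        + (u + 1 / 2) ^ 2 * ‖x - y‖ ^ 2 := by
    simp only [← real_inner_self_eq_norm_sq, inner_add_left, inner_add_right, inner_sub_left,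
      inner_sub_right, real_inner_smul_left, real_inner_smul_right, real_inner_comm x y]
    ring
  have h4 : 0 ≤ (u + 1 / 2) * (‖x‖ ^ 2 - ‖y‖ ^ 2) := by
    apply mul_nonneg (by linarith)
    have := pow_le_pow_left₀ (norm_nonneg y) hxy 2
    linarith
  rw [hup] at e3
  nlinarith [sq_nonneg ‖(1 / 2 : ℝ) • (x + y)‖]

theorem exists_sphere_mul_le {n : ℕ} {x y : EuclideanSpace ℝ (Fin n)}
    (hx : ‖x‖ < 1) (hy : ‖y‖ < 1) (hne : x ≠ y) :
    ∃ p ∈ sphere (0 : EuclideanSpace ℝ (Fin n)) 1,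
      dist x p * dist p y ≤ 1 - dist x y ^ 2 / 4 := by
  rcases le_total ‖y‖ ‖x‖ with h | h
  · exact exists_sphere_mul_le_of_norm_le hx h hne
  · obtain ⟨p, hp, hle⟩ := exists_sphere_mul_le_of_norm_le hy h hne.symm
    refine ⟨p, hp, ?_⟩
    rwa [dist_comm x p, dist_comm p y, mul_comm, dist_comm x y]

theorem one_sub_norm_le_dist {n : ℕ} {x p : EuclideanSpace ℝ (Fin n)}
    (hp : p ∈ sphere (0 : EuclideanSpace ℝ (Fin n)) 1) : 1 - ‖x‖ ≤ dist x p := by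
  have h := norm_sub_norm_le p x
  rw [mem_sphere_zero_iff_norm.mp hp, ← dist_eq_norm, dist_comm] at h
  exact h

theorem dist_lt_two {n : ℕ} {x y : EuclideanSpace ℝ (Fin n)}
    (hx : ‖x‖ < 1) (hy : ‖y‖ < 1) : dist x y < 2 := by
  rw [dist_eq_norm]
  linarith [norm_sub_le x y]

theorem two_mul_div_sqrt (d : ℝ) :
    2 * d / Real.sqrt (4 - d ^ 2) = d / Real.sqrt (1 - d ^ 2 / 4) := by
  have h : Real.sqrt (4 - d ^ 2) = 2 * Real.sqrt (1 - d ^ 2 / 4) := by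
    rw [show 4 - d ^ 2 = 2 ^ 2 * (1 - d ^ 2 / 4) by ring, Real.sqrt_mul (by norm_num),
      Real.sqrt_sq (by norm_num)]
  rw [h, mul_div_mul_left _ _ (by norm_num)]

/-- The supremum defining `scTau` on the unit ball is a genuine one, not the junk value of `sSup`. -/
theorem bddAbove_scTau {n : ℕ} {x y : EuclideanSpace ℝ (Fin n)}
    (hx : ‖x‖ < 1) (hy : ‖y‖ < 1) :
    BddAbove ((fun p => dist x y / Real.sqrt (dist x p * dist p y)) ''
      sphere (0 : EuclideanSpace ℝ (Fin n)) 1) := by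
  refine ⟨dist x y / Real.sqrt ((1 - ‖x‖) * (1 - ‖y‖)), ?_⟩
  rintro _ ⟨p, hp, rfl⟩
  have h1 := one_sub_norm_le_dist (x := x) hp
  have h2 := one_sub_norm_le_dist (x := y) hp
  rw [dist_comm] at h2
  have hx' : 0 < 1 - ‖x‖ := by linarith
  have hy' : 0 < 1 - ‖y‖ := by linarith
  dsimp only
  gcongr

theorem log_le_scTau {n : ℕ} {x y : EuclideanSpace ℝ (Fin n)} (hx : ‖x‖ < 1) (hy : ‖y‖ < 1) :
    Real.log (1 + 2 * dist x y / Real.sqrt (4 - dist x y ^ 2)) ≤ scTau (ball 0 1) x y := by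
  rw [two_mul_div_sqrt, scTau, frontier_ball _ one_ne_zero]
  refine Real.log_le_log (by positivity) ?_
  gcongr
  rcases eq_or_ne x y with rfl | hne
  · rw [dist_self, zero_div]
    refine Real.sSup_nonneg ?_
    rintro _ ⟨p, -, rfl⟩
    simp
  · obtain ⟨p, hp, hle⟩ := exists_sphere_mul_le hx hy hne
    refine le_trans ?_ (le_csSup (bddAbove_scTau hx hy) ⟨p, hp, rfl⟩)
    have h1 := one_sub_norm_le_dist (x := x) hp
    have h2 := one_sub_norm_le_dist (x := y) hp
    rw [dist_comm] at h2
    have : 0 < dist x p * dist p y := mul_pos (by linarith) (by linarith)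
    dsimp only
    gcongr

theorem scTau_neg_le {n : ℕ} {x : EuclideanSpace ℝ (Fin n)} (hx : ‖x‖ < 1) :
    scTau (ball 0 1) x (-x) ≤
      Real.log (1 + 2 * dist x (-x) / Real.sqrt (4 - dist x (-x) ^ 2)) := by
  rw [two_mul_div_sqrt, scTau, frontier_ball _ one_ne_zero]
  have hnn : 0 ≤ sSup ((fun p => dist x (-x) / Real.sqrt (dist x p * dist p (-x))) ''
      sphere (0 : EuclideanSpace ℝ (Fin n)) 1) := by
    refine Real.sSup_nonneg ?_
    rintro _ ⟨p, -, rfl⟩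
    positivity
  refine Real.log_le_log (by positivity) ?_
  gcongr
  refine Real.sSup_le ?_ (by positivity)
  rintro _ ⟨p, hp, rfl⟩
  have hd : dist x (-x) = 2 * ‖x‖ := by
    rw [dist_eq_norm, sub_neg_eq_add, ← two_smul ℝ x, norm_smul]
    norm_num
  have h1 : 0 < 1 - dist x (-x) ^ 2 / 4 := by
    rw [hd]
    nlinarith [norm_nonneg x]
  have h2 : 1 - dist x (-x) ^ 2 / 4 ≤ dist x p * dist p (-x) := by
    have h := real_inner_le_norm (p - x) (p + x)
    have e : inner ℝ (p - x) (p + x) = ‖p‖ ^ 2 - ‖x‖ ^ 2 := by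
      simp only [← real_inner_self_eq_norm_sq, inner_add_right, inner_sub_left,
        real_inner_comm x p]
      ring
    rw [e, mem_sphere_zero_iff_norm.mp hp] at h
    rw [hd, dist_comm x p, dist_eq_norm, dist_eq_norm, sub_neg_eq_add]
    linarith
  dsimp only
  gcongr

theorem scTau_neg_eq {n : ℕ} {x : EuclideanSpace ℝ (Fin n)} (hx : ‖x‖ < 1) :
    scTau (ball 0 1) x (-x) =
      Real.log (1 + 2 * dist x (-x) / Real.sqrt (4 - dist x (-x) ^ 2)) :=
  le_antisymm (scTau_neg_le hx) (log_le_scTau hx (by rwa [norm_neg]))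

/-- Sharp lower bound for the scale invariant Cassinian metric of the unit ball:
with `w = (|x−y|/2) e₁`, one has
`τ̃_{Bⁿ}(−w,w) = log(1 + 2|x−y|/√(4 − |x−y|²)) ≤ τ̃_{Bⁿ}(x,y)`,
with equality when `y = −x`. -/
theorem stmt_5 (n : ℕ) (hn : 0 < n) (x y : EuclideanSpace ℝ (Fin n))
    (hx : x ∈ ball (0 : EuclideanSpace ℝ (Fin n)) 1)
    (hy : y ∈ ball (0 : EuclideanSpace ℝ (Fin n)) 1)
    (w : EuclideanSpace ℝ (Fin n))
    (hw : w = (dist x y / 2) • EuclideanSpace.single (⟨0, hn⟩ : Fin n) (1 : ℝ)) :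
    scTau (ball 0 1) (-w) w = Real.log (1 + 2 * dist x y / Real.sqrt (4 - dist x y ^ 2)) ∧
    Real.log (1 + 2 * dist x y / Real.sqrt (4 - dist x y ^ 2)) ≤ scTau (ball 0 1) x y ∧
    (y = -x →
      scTau (ball 0 1) x y =
        Real.log (1 + 2 * dist x y / Real.sqrt (4 - dist x y ^ 2))) := by
  rw [mem_ball_zero_iff] at hx hy
  refine ⟨?_, log_le_scTau hx hy, ?_⟩
  · have hnw : ‖w‖ = dist x y / 2 := by
      rw [hw, norm_smul, Real.norm_of_nonneg (by positivity), EuclideanSpace.norm_single]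
      simp
    have hw1 : ‖-w‖ < 1 := by
      rw [norm_neg, hnw]
      linarith [dist_lt_two hx hy]
    have hdw : dist (-w) w = dist x y := by
      rw [dist_comm, dist_eq_norm, sub_neg_eq_add, ← two_smul ℝ w, norm_smul, hnw]
      norm_num
      ring
    have h := scTau_neg_eq hw1
    rwa [neg_neg, hdw] at h
  · rintro rfl
    exact scTau_neg_eq hx
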